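/- arXiv:1911.10944 — 5 statements merged into one kernel-verified Lean document; each statement's English description precedes it below -/
import Mathlib

section
/- For every w > 0 and every real y with -1 ≤ y < 1, the series ∑_{l=0}^∞ (2l+1)·P_l(y)/(l(l+1)+w) converges. -/
open Filter Topology

/-- The Legendre polynomials `P l` on `ℝ`, i.e. the orthogonal polynomials on `[-1,1]`
normalized by `P l 1 = 1`, defined via the Bonnet recurrence
`P 0 y = 1`, `P 1 y = y`, `(n+2) • P (n+2) y = (2n+3) y P (n+1) y - (n+1) P n y`. -/
noncomputable def legendreP : ℕ → ℝ → ℝ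
  | 0, _ => 1
  | 1, y => y
  | (n + 2), y =>
      ((2 * (n : ℝ) + 3) * y * legendreP (n + 1) y - ((n : ℝ) + 1) * legendreP n y) / ((n : ℝ) + 2)

lemma legendreP_succ_succ (n : ℕ) (y : ℝ) : legendreP (n + 2) y =
    ((2 * (n : ℝ) + 3) * y * legendreP (n + 1) y - ((n : ℝ) + 1) * legendreP n y)
      / ((n : ℝ) + 2) := by
  rw [legendreP]

/-- A discrete energy that does not increase along the recurrence. -/
lemma legendreP_energy (y : ℝ) (n : ℕ) :
    (1 - y ^ 2) * legendreP (n + 1) y ^ 2 + (legendreP n y - y * legendreP (n + 1) y) ^ 2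
      ≤ 1 - y ^ 2 := by
  induction n with
  | zero => simp only [legendreP]; nlinarith
  | succ n ih =>
    have hn : (0 : ℝ) ≤ n := Nat.cast_nonneg n
    have h2 : (n : ℝ) + 2 ≠ 0 := by positivity
    set p := legendreP n y
    set q := legendreP (n + 1) y
    set r : ℝ := ((n : ℝ) + 1) / (n + 2) with hr
    have hr0 : 0 ≤ r := by positivity
    have hr1 : r ≤ 1 := by rw [hr, div_le_one (by positivity)]; linarith
    have e : legendreP (n + 1 + 1) y = y * q - r * (p - y * q) := by
      rw [legendreP_succ_succ, hr]; field_simp; ring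
    rw [e]
    have hrr : r ^ 2 ≤ 1 := by nlinarith
    have := mul_le_mul_of_nonneg_right hrr (sq_nonneg (p - y * q))
    have key : (1 - y ^ 2) * (y * q - r * (p - y * q)) ^ 2
        + (q - y * (y * q - r * (p - y * q))) ^ 2
        = (1 - y ^ 2) * q ^ 2 + r ^ 2 * (p - y * q) ^ 2 := by ring
    linarith

lemma legendreP_neg_one (n : ℕ) :
    legendreP n (-1) = (-1) ^ n ∧ legendreP (n + 1) (-1) = (-1) ^ (n + 1) := by
  induction n with
  | zero => simp [legendreP]
  | succ n ih =>
    refine ⟨ih.2, ?_⟩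
    have h2 : (n : ℝ) + 2 ≠ 0 := by positivity
    rw [legendreP_succ_succ, ih.1, ih.2]
    field_simp
    ring

lemma abs_legendreP_le_one (y : ℝ) (hy₁ : -1 ≤ y) (hy₂ : y < 1) (n : ℕ) :
    |legendreP n y| ≤ 1 := by
  rcases hy₁.eq_or_lt with rfl | h
  · rw [(legendreP_neg_one n).1]; simp
  · cases n with
    | zero => simp [legendreP]
    | succ n =>
      have hE := legendreP_energy y n
      have hpos : 0 < 1 - y ^ 2 := by nlinarith
      have h1 : (1 - y ^ 2) * legendreP (n + 1) y ^ 2 ≤ (1 - y ^ 2) * 1 := by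
        nlinarith [sq_nonneg (legendreP n y - y * legendreP (n + 1) y)]
      exact (sq_le_one_iff_abs_le_one _).1 (le_of_mul_le_mul_left h1 hpos)

/-- Christoffel-Darboux numerator. -/
noncomputable def legD (y : ℝ) (l : ℕ) : ℝ := l * (legendreP (l - 1) y - legendreP l y)

lemma legD_sub (y : ℝ) (l : ℕ) :
    legD y (l + 1) - legD y l = (1 - y) * ((2 * (l : ℝ) + 1) * legendreP l y) := by
  cases l with
  | zero => simp [legD, legendreP]
  | succ n =>
    have h2 : (n : ℝ) + 2 ≠ 0 := by positivity
    simp only [legD, Nat.add_sub_cancel]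
    rw [legendreP_succ_succ]
    push_cast
    field_simp
    ring

lemma abs_legD_le (y : ℝ) (hy₁ : -1 ≤ y) (hy₂ : y < 1) (l : ℕ) : |legD y l| ≤ 2 * l := by
  have a := abs_le.1 (abs_legendreP_le_one y hy₁ hy₂ (l - 1))
  have b := abs_le.1 (abs_legendreP_le_one y hy₁ hy₂ l)
  rw [legD, abs_mul, Nat.abs_cast, mul_comm]
  gcongr
  rw [abs_le]
  constructor <;> linarith [a.1, a.2, b.1, b.2]

/-- For every `w > 0` and `-1 ≤ y < 1`, the series `∑ (2l+1) P l y / (l(l+1)+w)`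
converges (its partial sums tend to a limit). -/
theorem screened_series_converges (w : ℝ) (hw : 0 < w) (y : ℝ) (hy₁ : -1 ≤ y) (hy₂ : y < 1) :
    ∃ S : ℝ, Tendsto (fun N : ℕ => ∑ l ∈ Finset.range N,
      (2 * (l : ℝ) + 1) * legendreP l y / ((l : ℝ) * ((l : ℝ) + 1) + w)) atTop (𝓝 S) := by
  set b : ℕ → ℝ := fun l => 1 / ((l : ℝ) * ((l : ℝ) + 1) + w) with hb
  have hbs : Summable b := by
    rw [← summable_nat_add_iff 1]
    have h := (summable_nat_add_iff 1).2 (Real.summable_one_div_nat_pow.2 (one_lt_two))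
    refine Summable.of_nonneg_of_le (fun n => by simp only [hb]; positivity) (fun n => ?_) h
    simp only [hb]
    apply one_div_le_one_div_of_le (by positivity)
    push_cast
    have : (0 : ℝ) ≤ n := Nat.cast_nonneg n
    nlinarith
  set f : ℕ → ℝ := fun l => legD y (l + 1) * (b l - b (l + 1)) with hf
  have hfs : Summable f := by
    refine Summable.of_norm_bounded (hbs.mul_left 4) (fun l => ?_)
    have hl : (0 : ℝ) ≤ l := Nat.cast_nonneg l
    have hD := abs_legD_le y hy₁ hy₂ (l + 1)
    have e : b l - b (l + 1) = b l * (2 * ((l : ℝ) + 1) * b (l + 1)) := by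
      simp only [hb]
      push_cast
      field_simp
      ring
    have hb0 : 0 ≤ b l := by simp only [hb]; positivity
    have hb1 : 0 ≤ b (l + 1) := by simp only [hb]; positivity
    have hk : ((l : ℝ) + 1) ^ 2 * b (l + 1) ≤ 1 := by
      simp only [hb]
      push_cast
      rw [mul_one_div, div_le_one (by positivity)]
      nlinarith
    rw [Real.norm_eq_abs, hf]
    simp only []
    rw [e, abs_mul, abs_of_nonneg (a := b l * _) (by positivity)]
    push_cast at hD
    calc |legD y (l + 1)| * (b l * (2 * ((l : ℝ) + 1) * b (l + 1)))
        ≤ (2 * ((l : ℝ) + 1)) * (b l * (2 * ((l : ℝ) + 1) * b (l + 1))) := by gcongr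
      _ = 4 * b l * (((l : ℝ) + 1) ^ 2 * b (l + 1)) := by ring
      _ ≤ 4 * b l * 1 := by gcongr
      _ = 4 * b l := by ring
  have hbd : Tendsto (fun N => legD y N * b N) atTop (𝓝 0) := by
    have h0 : Tendsto (fun N : ℕ => 2 * (1 / ((N : ℝ) + 1))) atTop (𝓝 0) := by
      simpa using (tendsto_one_div_add_atTop_nhds_zero_nat (𝕜 := ℝ)).const_mul 2
    refine squeeze_zero_norm (fun N => ?_) h0
    have hN : (0 : ℝ) ≤ N := Nat.cast_nonneg N
    have hb0 : 0 ≤ b N := by simp only [hb]; positivity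
    rw [Real.norm_eq_abs, abs_mul, abs_of_nonneg hb0]
    calc |legD y N| * b N ≤ 2 * N * b N := by
          gcongr; exact abs_legD_le y hy₁ hy₂ N
      _ ≤ 2 * (1 / ((N : ℝ) + 1)) := by
          simp only [hb]
          rw [mul_assoc, mul_one_div]
          gcongr 2 * ?_
          rw [div_le_div_iff₀ (by positivity) (by positivity)]
          nlinarith
  have h1y : 1 - y ≠ 0 := by linarith
  have hsum : ∀ N : ℕ, ∑ l ∈ Finset.range N,
      (2 * (l : ℝ) + 1) * legendreP l y / ((l : ℝ) * ((l : ℝ) + 1) + w)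
      = (1 - y)⁻¹ * (legD y N * b N + ∑ l ∈ Finset.range N, f l) := by
    intro N
    induction N with
    | zero => simp [legD]
    | succ N ih =>
      rw [Finset.sum_range_succ, Finset.sum_range_succ, ih]
      have h := legD_sub y N
      have e : (2 * (N : ℝ) + 1) * legendreP N y / ((N : ℝ) * ((N : ℝ) + 1) + w)
          = (1 - y)⁻¹ * ((legD y (N + 1) - legD y N) * b N) := by
        rw [h, div_eq_mul_one_div, mul_assoc (1 - y), inv_mul_cancel_left₀ h1y]
      rw [e]
      simp only [hf]
      ring
  refine ⟨(1 - y)⁻¹ * (0 + ∑' l, f l), ?_⟩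
  simp_rw [hsum]
  exact (hbd.add hfs.hasSum.tendsto_sum_nat).const_mul _
end

section
/- For every real u with |u| < 1 and every real y with -1 ≤ y ≤ 1, the generating-function identity ∑_{l=0}^∞ u^l · P_l(y) = 1/√(u² - 2yu + 1) holds, the series being convergent. -/
open Filter Topology

lemma lp_energy (y : ℝ) (n : ℕ) :
    (legendreP n y - y * legendreP (n+1) y)^2 + (1-y^2) * legendreP (n+1) y ^2 ≤ 1 - y^2 := by
  induction n with
  | zero => simp only [legendreP]; nlinarith
  | succ n ih =>
    have hn : (0:ℝ) ≤ n := Nat.cast_nonneg n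
    set a := legendreP n y
    set b := legendreP (n+1) y
    obtain ⟨d, hd⟩ : ∃ d, d = (a - y * b) / ((n:ℝ)+2) := ⟨_, rfl⟩
    have hd2 : a - y * b = d * (n+2) := by rw [hd]; field_simp
    have hc : legendreP (n+1+1) y = 2*y*b - a + d := by
      show ((2 * (n : ℝ) + 3) * y * b - ((n : ℝ) + 1) * a) / ((n : ℝ) + 2) = _
      rw [hd]; field_simp; ring
    rw [hc]
    have ha : a = d * (n+2) + y * b := by linarith
    have : (b - y * (2*y*b - a + d))^2 + (1-y^2) * (2*y*b - a + d)^2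
        = (a - y * b)^2 + (1-y^2)*b^2 - (2*n+3)*d^2 := by
      rw [ha]; ring
    nlinarith [mul_nonneg hn (sq_nonneg d), sq_nonneg d]

lemma lp_pow (y : ℝ) (hy : y^2 = 1) (n : ℕ) :
    legendreP n y = y^n ∧ legendreP (n+1) y = y^(n+1) := by
  induction n with
  | zero => simp [legendreP]
  | succ n ih =>
    refine ⟨ih.2, ?_⟩
    show ((2 * (n : ℝ) + 3) * y * legendreP (n+1) y - ((n : ℝ) + 1) * legendreP n y) / ((n : ℝ) + 2) = _
    rw [ih.1, ih.2]
    have hn : (n:ℝ)+2 ≠ 0 := by positivity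
    have e : y^(n+1+1) = y^n := by rw [pow_succ, pow_succ, mul_assoc, ← sq, hy, mul_one]
    rw [e, div_eq_iff hn, pow_succ]
    linear_combination (2*n+3) * y^n * hy

lemma lp_bound (y : ℝ) (hy₁ : -1 ≤ y) (hy₂ : y ≤ 1) (n : ℕ) : |legendreP n y| ≤ 1 := by
  have h1 : y^2 ≤ 1 := by nlinarith
  rcases h1.lt_or_eq with h | h
  · cases n with
    | zero => simp [legendreP]
    | succ n =>
      have := lp_energy y n
      rw [← sq_le_one_iff_abs_le_one]
      have h3 : (1-y^2) * legendreP (n+1) y ^2 ≤ (1-y^2) * 1 := by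
        nlinarith [sq_nonneg (legendreP n y - y * legendreP (n+1) y)]
      exact le_of_mul_le_mul_left h3 (by linarith)
  · rw [(lp_pow y h n).1, abs_pow]
    exact pow_le_one₀ (abs_nonneg _) (abs_le.2 ⟨hy₁, hy₂⟩)

lemma lp_summable (y : ℝ) (hy₁ : -1 ≤ y) (hy₂ : y ≤ 1) (x : ℝ) (hx : |x| < 1) :
    Summable (fun n : ℕ => x^n * legendreP n y) := by
  refine Summable.of_norm_bounded (summable_geometric_of_lt_one (abs_nonneg x) hx) fun n => ?_
  rw [norm_mul, norm_pow, Real.norm_eq_abs, Real.norm_eq_abs]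
  exact mul_le_of_le_one_right (by positivity) (lp_bound y hy₁ hy₂ n)

lemma geom_summable (r : ℝ) (h0 : 0 ≤ r) (hr : r < 1) :
    Summable (fun n : ℕ => (n:ℝ) * r^(n-1)) := by
  rw [← summable_nat_add_iff 1]
  have h := summable_pow_mul_geometric_of_norm_lt_one (R := ℝ) 1 (r := r)
    (by rwa [Real.norm_eq_abs, abs_of_nonneg h0])
  have := h.add (summable_geometric_of_lt_one h0 hr)
  refine this.congr fun n => ?_
  simp; ring

lemma lp_term_bound (y : ℝ) (hy₁ : -1 ≤ y) (hy₂ : y ≤ 1) (x r : ℝ) (hx : |x| ≤ r) (n : ℕ) :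
    ‖(n:ℝ) * x^(n-1) * legendreP n y‖ ≤ n * r^(n-1) := by
  rw [norm_mul, norm_mul, norm_pow, Real.norm_eq_abs, Real.norm_eq_abs, Real.norm_eq_abs, Nat.abs_cast]
  have : |x|^(n-1) ≤ r^(n-1) := pow_le_pow_left₀ (abs_nonneg _) hx _
  calc (n:ℝ) * |x|^(n-1) * |legendreP n y| ≤ (n:ℝ) * |x|^(n-1) :=
        mul_le_of_le_one_right (by positivity) (lp_bound y hy₁ hy₂ n)
    _ ≤ _ := by gcongr

lemma lp_deriv (y : ℝ) (hy₁ : -1 ≤ y) (hy₂ : y ≤ 1) (x : ℝ) (hx : |x| < 1) :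
    HasDerivAt (fun z => ∑' n : ℕ, z^n * legendreP n y)
      (∑' n : ℕ, (n:ℝ) * x^(n-1) * legendreP n y) x := by
  obtain ⟨r, h1, h2⟩ := exists_between hx
  have h0 : 0 < r := (abs_nonneg x).trans_lt h1
  refine hasDerivAt_tsum_of_isPreconnected (geom_summable r h0.le h2) Metric.isOpen_ball
    (convex_ball (0:ℝ) r).isPreconnected
    (g := fun n z => z^n * legendreP n y)
    (g' := fun n z => (n:ℝ) * z^(n-1) * legendreP n y) (y₀ := x) ?_ ?_ ?_ ?_ ?_
  · intro n z _
    exact (hasDerivAt_pow n z).mul_const _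
  · intro n z hz
    exact lp_term_bound y hy₁ hy₂ z r (by simpa using (mem_ball_zero_iff.1 hz).le) n
  · simpa using h1
  · exact lp_summable y hy₁ hy₂ x hx
  · simpa using h1

lemma lp_ode (y : ℝ) (hy₁ : -1 ≤ y) (hy₂ : y ≤ 1) (x : ℝ) (hx : |x| < 1) :
    (x^2 - 2*y*x + 1) * (∑' n : ℕ, (n:ℝ) * x^(n-1) * legendreP n y)
      = (y - x) * ∑' n : ℕ, x^n * legendreP n y := by
  have hF := (lp_summable y hy₁ hy₂ x hx).hasSum
  have hD := (Summable.of_norm_bounded (geom_summable |x| (abs_nonneg x) hx)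
    fun n => lp_term_bound y hy₁ hy₂ x |x| le_rfl n).hasSum
  set F := ∑' n : ℕ, x^n * legendreP n y
  set D := ∑' n : ℕ, (n:ℝ) * x^(n-1) * legendreP n y
  have f1 := (hasSum_nat_add_iff' 1).2 hF
  have d1 := (hasSum_nat_add_iff' 1).2 hD
  have d2 := (hasSum_nat_add_iff' 2).2 hD
  have tot := (((d2.sub (d1.mul_left (2*y*x))).sub (f1.mul_left y)).add
    (hD.mul_left (x^2))).add (hF.mul_left x)
  have := tot.unique (a₂ := 0) ?_
  · simp [Finset.sum_range_succ, legendreP] at this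
    linear_combination this
  · have hz : HasSum (fun _ : ℕ => (0:ℝ)) 0 := hasSum_zero
    refine (congrArg (fun f : ℕ → ℝ => HasSum f 0) (funext fun n => ?_)).mpr hz
    have hn : (n:ℝ)+2 ≠ 0 := by positivity
    have hr : ((n:ℝ)+2) * legendreP (n+2) y
        = (2 * (n : ℝ) + 3) * y * legendreP (n + 1) y - ((n : ℝ) + 1) * legendreP n y := by
      rw [legendreP]; field_simp
    have hp : (n:ℝ) * x^2 * x^(n-1) = n * x * x^n := by
      cases n with
      | zero => simp
      | succ m => simp only [Nat.add_sub_cancel]; ring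
    have e1 : n + 2 - 1 = n + 1 := rfl
    simp only [e1, Nat.add_sub_cancel]
    push_cast
    linear_combination x^(n+1) * hr + legendreP n y * hp

/-- The Legendre generating-function identity:
for `|u| < 1` and `y ∈ [-1,1]`, `∑ u^l P l y = 1/√(u² - 2yu + 1)`. -/
theorem legendre_generating_function (u y : ℝ) (hu : |u| < 1) (hy₁ : -1 ≤ y) (hy₂ : y ≤ 1) :
    HasSum (fun l : ℕ => u ^ l * legendreP l y)
      (1 / Real.sqrt (u ^ 2 - 2 * y * u + 1)) := by
  have hw : ∀ x : ℝ, |x| < 1 → 0 < x^2 - 2*y*x + 1 := by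
    intro x hx
    have hx2 : x^2 < 1 := (sq_lt_one_iff_abs_lt_one x).2 hx
    have ⟨ha, hb⟩ := abs_lt.1 hx
    rcases le_total 0 x with h | h
    · nlinarith [mul_nonneg h (sub_nonneg.2 hy₂), sq_pos_of_pos (sub_pos.2 hb)]
    · nlinarith [mul_nonneg (neg_nonneg.2 h) (by linarith : 0 ≤ 1 + y),
        sq_pos_of_pos (by linarith : 0 < 1 + x)]
  have key : ∀ x ∈ Metric.ball (0:ℝ) 1, HasDerivAt
      (fun z => (∑' n : ℕ, z^n * legendreP n y) * Real.sqrt (z^2 - 2*y*z + 1)) 0 x := by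
    intro x hx
    have hx : |x| < 1 := by simpa using hx
    have h1 := lp_deriv y hy₁ hy₂ x hx
    have h2 : HasDerivAt (fun z : ℝ => z^2 - 2*y*z + 1) (2*x - 2*y) x := by
      have := (((hasDerivAt_id x).pow 2).sub ((hasDerivAt_id x).const_mul (2*y))).add_const 1
      refine this.congr_deriv ?_
      simp
    have h3 := h1.mul (h2.sqrt (hw x hx).ne')
    refine h3.congr_deriv ?_
    have ode := lp_ode y hy₁ hy₂ x hx
    have hs := Real.sq_sqrt (hw x hx).le
    have hs0 := (Real.sqrt_pos.2 (hw x hx)).ne'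
    generalize Real.sqrt (x^2 - 2*y*x + 1) = s at hs hs0 ⊢
    rw [← hs] at ode
    field_simp
    linear_combination ode
  have hc := Metric.isOpen_ball.is_const_of_deriv_eq_zero (convex_ball (0:ℝ) 1).isPreconnected
    (fun x hx => (key x hx).differentiableAt.differentiableWithinAt)
    (fun x hx => (key x hx).deriv) (x := u) (y := 0) (by simpa using hu) (by simp)
  have h0 : ∑' n : ℕ, (0:ℝ)^n * legendreP n y = 1 := by
    rw [tsum_eq_single 0]
    · simp [legendreP]
    · intro n hn; simp [hn]
  have hs := (lp_summable y hy₁ hy₂ u hu).hasSum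
  convert hs using 1
  have hs0 := (Real.sqrt_pos.2 (hw u hu)).ne'
  rw [div_eq_iff hs0, hc]
  rw [h0]
  simp
end

section
/- Let w > 1/4, β = √(w - 1/4), and let y be a real number with -1 ≤ y < 1. Then ∑_{l=0}^∞ (2l+1)·P_l(y)/(l(l+1)+w) = 2·∫_0^∞ e^{-z/2}·cos(βz)/√(e^{-2z} - 2e^{-z}y + 1) dz, where the series converges and the integral converges. Equivalently, the Green's function G = -(1/4π)·∑_{l=0}^∞ (2l+1)P_l(y)/(l(l+1)+w) of the screened Poisson equation on the sphere admits the integral form G = -(1/2π)·∫_0^∞ e^{-z/2}cos(βz)/√(e^{-2z} - 2e^{-z}y + 1) dz. -/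
open Filter Topology

/-- Coefficients of `(1 - x)^(-1/2)`. -/
noncomputable def lgA : ℕ → ℝ
  | 0 => 1
  | (k + 1) => lgA k * (2 * (k : ℝ) + 1) / (2 * (k : ℝ) + 2)

lemma lgA_nonneg : ∀ k, 0 ≤ lgA k
  | 0 => by simp [lgA]
  | (k + 1) => by
    have := lgA_nonneg k
    rw [lgA]; positivity

lemma lgA_succ (k : ℕ) : 2 * ((k : ℝ) + 1) * lgA (k + 1) = (2 * (k : ℝ) + 1) * lgA k := by
  rw [lgA]
  have : (2 * (k : ℝ) + 2) ≠ 0 := by positivity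
  field_simp

lemma legendreP_succ (n : ℕ) (y : ℝ) : ((n : ℝ) + 2) * legendreP (n + 2) y =
    (2 * (n : ℝ) + 3) * y * legendreP (n + 1) y - ((n : ℝ) + 1) * legendreP n y := by
  rw [legendreP]
  have : ((n : ℝ) + 2) ≠ 0 := by positivity
  field_simp

lemma legendreP_one (n : ℕ) : legendreP n 1 = 1 ∧ legendreP (n + 1) 1 = 1 := by
  induction n with
  | zero => simp [legendreP]
  | succ n ih =>
    refine ⟨ih.2, ?_⟩
    have h := legendreP_succ n 1
    rw [ih.1, ih.2] at h
    have h2 : ((n : ℝ) + 2) ≠ 0 := by positivity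
    apply mul_left_cancel₀ h2
    rw [h]; ring

/-- Power series of `(1 - u X)^(-1/2)`. -/
noncomputable def lgS (u : ℂ) : PowerSeries ℂ := PowerSeries.mk (fun k => (lgA k : ℂ) * u ^ k)

lemma lgS_ode (u : ℂ) : 2 * (1 - PowerSeries.C u * PowerSeries.X) *
    PowerSeries.derivative ℂ (lgS u) = PowerSeries.C u * lgS u := by
  have e : 2 * (1 - PowerSeries.C u * PowerSeries.X) * PowerSeries.derivative ℂ (lgS u)
      = PowerSeries.C 2 * PowerSeries.derivative ℂ (lgS u)
        - PowerSeries.C (2 * u) * (PowerSeries.X * PowerSeries.derivative ℂ (lgS u)) := by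
    simp only [map_mul, map_ofNat]; ring
  rw [e]
  ext k
  simp only [map_sub, PowerSeries.coeff_C_mul]
  have hk : (2 : ℂ) * ((k : ℂ) + 1) * lgA (k + 1) = (2 * (k : ℂ) + 1) * lgA k := by
    exact_mod_cast lgA_succ k
  cases k with
  | zero =>
    simp [PowerSeries.coeff_derivative, lgS] at hk ⊢
    linear_combination u * hk
  | succ k =>
    simp only [PowerSeries.coeff_succ_X_mul, PowerSeries.coeff_derivative, lgS,
      PowerSeries.coeff_mk]
    push_cast at hk ⊢
    linear_combination u ^ (k + 2) * hk

lemma lgF_ode (u v y : ℂ) (h1 : u * v = 1) (h2 : u + v = 2 * y) :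
    PowerSeries.derivative ℂ (lgS u * lgS v)
      - PowerSeries.C (2 * y) * (PowerSeries.X * PowerSeries.derivative ℂ (lgS u * lgS v))
      + PowerSeries.X * (PowerSeries.X * PowerSeries.derivative ℂ (lgS u * lgS v))
    = PowerSeries.C y * (lgS u * lgS v) - PowerSeries.X * (lgS u * lgS v) := by
  have hu := lgS_ode u
  have hv := lgS_ode v
  have e1 : PowerSeries.C u * PowerSeries.C v = (1 : PowerSeries ℂ) := by
    rw [← map_mul, h1, map_one]
  have e2 : PowerSeries.C u + PowerSeries.C v = (2 * PowerSeries.C y : PowerSeries ℂ) := by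
    rw [← map_add, h2, map_mul, map_ofNat]
  have hd : PowerSeries.derivative ℂ (lgS u * lgS v) =
      lgS u * PowerSeries.derivative ℂ (lgS v) + lgS v * PowerSeries.derivative ℂ (lgS u) := by
    simp [Derivation.leibniz]
  rw [hd]
  generalize PowerSeries.derivative ℂ (lgS u) = A' at *
  generalize PowerSeries.derivative ℂ (lgS v) = B' at *
  generalize lgS u = A at *
  generalize lgS v = B at *
  have e3 : PowerSeries.C (2 * y) = (2 * PowerSeries.C y : PowerSeries ℂ) := by
    rw [map_mul, map_ofNat]
  rw [e3]
  generalize (PowerSeries.C u : PowerSeries ℂ) = U at *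
  generalize (PowerSeries.C v : PowerSeries ℂ) = V at *
  generalize (PowerSeries.C y : PowerSeries ℂ) = Y at *
  generalize (PowerSeries.X : PowerSeries ℂ) = X at *
  have two : (2 : PowerSeries ℂ) ≠ 0 := by
    rw [show (2 : PowerSeries ℂ) = PowerSeries.C 2 from (map_ofNat _ 2).symm]
    intro h
    have := congrArg (PowerSeries.coeff 0) h
    simp at this
  apply mul_left_cancel₀ two
  linear_combination (1 - V * X) * B * hu + (1 - U * X) * A * hv
    + (2 * X * (A * B' + B * A') + A * B) * e2
    - (2 * X * X * (A * B' + B * A') + 2 * X * A * B) * e1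

lemma lgF_eq (y : ℝ) (u v : ℂ) (h1 : u * v = 1) (h2 : u + v = 2 * y) (n : ℕ) :
    PowerSeries.coeff n (lgS u * lgS v) = legendreP n y ∧
    PowerSeries.coeff (n + 1) (lgS u * lgS v) = legendreP (n + 1) y := by
  have ode := lgF_ode u v y h1 h2
  generalize hF : lgS u * lgS v = F at *
  have h0 : PowerSeries.coeff 0 F = 1 := by
    rw [← hF]; simp [lgS, lgA]
  induction n with
  | zero =>
    refine ⟨by simpa [legendreP] using h0, ?_⟩
    have := congrArg (PowerSeries.coeff 0) ode
    simp only [map_sub, map_add, PowerSeries.coeff_C_mul, PowerSeries.coeff_zero_X_mul,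
      PowerSeries.coeff_derivative, h0] at this
    simpa [legendreP] using this
  | succ n ih =>
    refine ⟨ih.2, ?_⟩
    have := congrArg (PowerSeries.coeff (n + 1)) ode
    simp only [map_sub, map_add, PowerSeries.coeff_C_mul, PowerSeries.coeff_succ_X_mul,
      PowerSeries.coeff_derivative, ih.1, ih.2] at this
    have hr : ((n : ℂ) + 2) * legendreP (n + 2) y =
      (2 * (n : ℂ) + 3) * y * legendreP (n + 1) y - ((n : ℂ) + 1) * legendreP n y := by
      exact_mod_cast legendreP_succ n y
    have hx : PowerSeries.coeff n (PowerSeries.X * PowerSeries.derivative ℂ F)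
        = n * (legendreP n y : ℂ) := by
      cases n with
      | zero => simp
      | succ m =>
        rw [PowerSeries.coeff_succ_X_mul, PowerSeries.coeff_derivative, ih.1]
        push_cast; ring
    rw [hx] at this
    have hn : ((n : ℂ) + 2) ≠ 0 := by exact_mod_cast (by positivity : ((n : ℝ) + 2) ≠ 0)
    apply mul_left_cancel₀ hn
    rw [hr]
    push_cast at this
    linear_combination this

lemma legendreP_abs_le (y : ℝ) (h1 : -1 ≤ y) (h2 : y ≤ 1) (n : ℕ) : |legendreP n y| ≤ 1 := by
  set s := Real.sqrt (1 - y ^ 2) with hs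
  have hs2 : s ^ 2 = 1 - y ^ 2 := Real.sq_sqrt (by nlinarith)
  have hsc : (s : ℂ) ^ 2 = 1 - (y : ℂ) ^ 2 := by exact_mod_cast hs2
  set u : ℂ := y + s * Complex.I with hu
  set v : ℂ := y - s * Complex.I with hv
  have huv : u * v = 1 := by
    rw [hu, hv]; linear_combination hsc - (s : ℂ) ^ 2 * Complex.I_sq
  have huv2 : u + v = 2 * y := by rw [hu, hv]; ring
  have nu : ‖u‖ = 1 := by
    have : ‖u‖ ^ 2 = 1 := by
      rw [← Complex.normSq_eq_norm_sq, hu, Complex.normSq_add_mul_I]; linarith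
    nlinarith [norm_nonneg u]
  have nv : ‖v‖ = 1 := by
    have := congrArg norm huv
    rw [norm_mul, nu] at this; simpa using this
  have e1 := (lgF_eq y u v huv huv2 n).1
  have e2 := (lgF_eq 1 1 1 (by norm_num) (by norm_num) n).1
  rw [(legendreP_one n).1] at e2
  rw [PowerSeries.coeff_mul] at e1 e2
  simp only [lgS, PowerSeries.coeff_mk, one_pow, mul_one] at e1 e2
  have e2' : ∑ p ∈ Finset.HasAntidiagonal.antidiagonal n, lgA p.1 * lgA p.2 = 1 := by exact_mod_cast e2
  have : |legendreP n y| = ‖((legendreP n y : ℝ) : ℂ)‖ := by simp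
  rw [this, ← e1, ← e2']
  refine (norm_sum_le _ _).trans (Finset.sum_le_sum fun p _ => ?_)
  simp [nu, nv, abs_of_nonneg (lgA_nonneg _)]

lemma lg_partial_ode (y t : ℝ) (N : ℕ) :
    (1 - 2 * t * y + t ^ 2) * (∑ l ∈ Finset.range (N + 1), legendreP l y * ((l : ℝ) * t ^ (l - 1)))
      + (t - y) * ∑ l ∈ Finset.range (N + 1), legendreP l y * t ^ l
    = ((N : ℝ) + 1) * t ^ N * (legendreP N y * t - legendreP (N + 1) y) := by
  induction N with
  | zero => simp [legendreP]
  | succ N ih =>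
    rw [Finset.sum_range_succ, Finset.sum_range_succ _ (N + 1)]
    have h := legendreP_succ N y
    simp only [Nat.add_sub_cancel]
    push_cast
    linear_combination ih + t ^ (N + 1) * h

lemma lg_q_lower (y t : ℝ) (hy₁ : -1 ≤ y) (hy₂ : y < 1) (ht : 0 ≤ t) :
    (1 - y) / 2 ≤ 1 - 2 * t * y + t ^ 2 := by
  nlinarith [mul_nonneg (by linarith : 0 ≤ 1 + y) (sq_nonneg (1 - t)),
    mul_nonneg (by linarith : 0 ≤ 1 - y) ht, mul_nonneg (by linarith : 0 ≤ 1 - y) (sq_nonneg t)]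

lemma lg_partial_bound (y r c : ℝ) (hy₁ : -1 ≤ y) (hy₂ : y < 1) (hr : 0 ≤ r) (hr1 : r ≤ 1)
    (hc : c = Real.sqrt ((1 - y) / 2)) (N : ℕ) :
    |(∑ l ∈ Finset.range (N + 1), legendreP l y * r ^ l) * Real.sqrt (1 - 2 * r * y + r ^ 2) - 1|
      ≤ 2 / c * r ^ (N + 1) := by
  have hd : 0 < (1 - y) / 2 := by linarith
  have hc0 : 0 < c := hc ▸ Real.sqrt_pos.2 hd
  set f : ℝ → ℝ := fun t =>
    (∑ l ∈ Finset.range (N + 1), legendreP l y * t ^ l) * Real.sqrt (1 - 2 * t * y + t ^ 2) - 1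
    with hf
  have hderiv : ∀ t, 0 ≤ t → HasDerivAt f (((N : ℝ) + 1) * t ^ N *
      (legendreP N y * t - legendreP (N + 1) y) / Real.sqrt (1 - 2 * t * y + t ^ 2)) t := by
    intro t ht
    have hq := lg_q_lower y t hy₁ hy₂ ht
    have hq0 : 0 < 1 - 2 * t * y + t ^ 2 := by linarith
    have d1 : HasDerivAt (fun t : ℝ => ∑ l ∈ Finset.range (N + 1), legendreP l y * t ^ l)
        (∑ l ∈ Finset.range (N + 1), legendreP l y * ((l : ℝ) * t ^ (l - 1))) t :=
      HasDerivAt.fun_sum fun l _ => (hasDerivAt_pow l t).const_mul _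
    have d2 : HasDerivAt (fun t : ℝ => 1 - 2 * t * y + t ^ 2) (-2 * y + 2 * t) t := by
      have := ((((hasDerivAt_id t).const_mul 2).mul_const y).const_sub 1).add (hasDerivAt_pow 2 t)
      refine this.congr_deriv ?_
      simp
    have d3 := (d1.mul (d2.sqrt hq0.ne')).sub_const 1
    refine d3.congr_deriv ?_
    symm
    rw [← lg_partial_ode]
    have hs := Real.sq_sqrt hq0.le
    have hs0 := Real.sqrt_pos.2 hq0
    set s := Real.sqrt (1 - 2 * t * y + t ^ 2)
    rw [← hs]
    field_simp
    ring
  have key := image_norm_le_of_norm_deriv_right_le_deriv_boundary (f := f) (a := 0) (b := r)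
    (f' := fun t => ((N : ℝ) + 1) * t ^ N *
      (legendreP N y * t - legendreP (N + 1) y) / Real.sqrt (1 - 2 * t * y + t ^ 2))
    (B := fun t => 2 / c * t ^ (N + 1)) (B' := fun t => 2 / c * (((N + 1 : ℕ) : ℝ) * t ^ N))
    (fun t ht => (hderiv t ht.1).continuousAt.continuousWithinAt)
    (fun t ht => (hderiv t ht.1).hasDerivWithinAt)
    (by simp [hf, Finset.sum_range_succ', legendreP])
    (fun t => (hasDerivAt_pow (N + 1) t).const_mul _)
    (by
      intro t ht
      have hcs : c ≤ Real.sqrt (1 - 2 * t * y + t ^ 2) :=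
        hc ▸ Real.sqrt_le_sqrt (lg_q_lower y t hy₁ hy₂ ht.1)
      have ha := legendreP_abs_le y hy₁ hy₂.le N
      have hb := legendreP_abs_le y hy₁ hy₂.le (N + 1)
      have ht1 : t ≤ 1 := ht.2.le.trans hr1
      have hab : |legendreP N y * t - legendreP (N + 1) y| ≤ 2 := by
        refine (abs_sub _ _).trans ?_
        rw [abs_mul, abs_of_nonneg ht.1]
        nlinarith [abs_nonneg (legendreP N y), ht.1]
      have hp : 0 ≤ ((N : ℝ) + 1) * t ^ N := mul_nonneg (by positivity) (pow_nonneg ht.1 _)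
      rw [Real.norm_eq_abs, abs_div, abs_mul, abs_of_nonneg hp,
        abs_of_pos (hc0.trans_le hcs)]
      calc _ ≤ ((N : ℝ) + 1) * t ^ N * 2 / c := by gcongr
        _ = _ := by push_cast; ring)
    ⟨hr, le_refl r⟩
  simpa [hf] using key

lemma lg_laplace (a β : ℝ) (ha : 0 < a) :
    MeasureTheory.IntegrableOn (fun z : ℝ => Real.exp (-a * z) * Real.cos (β * z)) (Set.Ioi 0) ∧
    ∫ z in Set.Ioi (0 : ℝ), Real.exp (-a * z) * Real.cos (β * z) = a / (a ^ 2 + β ^ 2) := by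
  have hre : ((-a + β * Complex.I : ℂ)).re < 0 := by simpa using ha
  have hi := integrableOn_exp_mul_complex_Ioi hre 0
  have hv := integral_exp_mul_complex_Ioi hre 0
  have hpt : ∀ z : ℝ, (Complex.exp ((-a + β * Complex.I : ℂ) * z)).re
      = Real.exp (-a * z) * Real.cos (β * z) := by
    intro z; rw [Complex.exp_re]; simp
  refine ⟨?_, ?_⟩
  · have := hi.re
    simp only [RCLike.re_to_complex, hpt] at this
    exact this
  · have := integral_re hi
    simp only [RCLike.re_to_complex, hpt] at this
    rw [this, hv]
    simp [Complex.div_re, Complex.normSq_apply]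
    ring

/-- For `w > 1/4`, `β = √(w - 1/4)`, `-1 ≤ y < 1`:
`∑ (2l+1) P l y / (l(l+1)+w) = 2 ∫_0^∞ e^{-z/2} cos(βz)/√(e^{-2z} - 2e^{-z} y + 1) dz`,
where the series converges (partial sums tend to the integral) and the integral converges. -/
theorem screened_green_integral_form (w : ℝ) (hw : 1 / 4 < w)
    (β : ℝ) (hβ : β = Real.sqrt (w - 1 / 4))
    (y : ℝ) (hy₁ : -1 ≤ y) (hy₂ : y < 1) :
    MeasureTheory.IntegrableOn
      (fun z : ℝ => Real.exp (-z / 2) * Real.cos (β * z) /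
        Real.sqrt (Real.exp (-2 * z) - 2 * Real.exp (-z) * y + 1)) (Set.Ioi 0) ∧
    Tendsto (fun N : ℕ => ∑ l ∈ Finset.range N,
        (2 * (l : ℝ) + 1) * legendreP l y / ((l : ℝ) * ((l : ℝ) + 1) + w)) atTop
      (𝓝 (2 * ∫ z in Set.Ioi (0 : ℝ), Real.exp (-z / 2) * Real.cos (β * z) /
        Real.sqrt (Real.exp (-2 * z) - 2 * Real.exp (-z) * y + 1))) := by
  have hd : 0 < (1 - y) / 2 := by linarith
  obtain ⟨c, hc⟩ : ∃ c, c = Real.sqrt ((1 - y) / 2) := ⟨_, rfl⟩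
  have hc0 : 0 < c := hc ▸ Real.sqrt_pos.2 hd
  have hβ2 : β ^ 2 = w - 1 / 4 := by rw [hβ]; exact Real.sq_sqrt (by linarith)
  have hq : ∀ z : ℝ, Real.exp (-2 * z) - 2 * Real.exp (-z) * y + 1
      = 1 - 2 * Real.exp (-z) * y + Real.exp (-z) ^ 2 := by
    intro z
    have : Real.exp (-2 * z) = Real.exp (-z) ^ 2 := by
      rw [← Real.exp_nat_mul]; congr 1; push_cast; ring
    rw [this]; ring
  simp only [hq]
  set F : ℕ → ℝ → ℝ := fun N z => Real.exp (-z / 2) * Real.cos (β * z) *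
    ∑ l ∈ Finset.range (N + 1), legendreP l y * Real.exp (-z) ^ l with hF
  have hcs : ∀ z : ℝ, c ≤ Real.sqrt (1 - 2 * Real.exp (-z) * y + Real.exp (-z) ^ 2) := fun z =>
    hc ▸ Real.sqrt_le_sqrt (lg_q_lower y _ hy₁ hy₂ (Real.exp_pos _).le)
  have hexp : MeasureTheory.IntegrableOn (fun z : ℝ => Real.exp (-z / 2)) (Set.Ioi 0) := by
    have := (lg_laplace (1 / 2) 0 (by norm_num)).1
    refine this.congr_fun (fun z _ => ?_) measurableSet_Ioi
    simp; ring
  have hcos : ∀ z : ℝ, |Real.exp (-z / 2) * Real.cos (β * z)| ≤ Real.exp (-z / 2) := by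
    intro z
    rw [abs_mul, abs_of_pos (Real.exp_pos _)]
    exact mul_le_of_le_one_right (Real.exp_pos _).le (Real.abs_cos_le_one _)
  have hterm : ∀ (l : ℕ) (z : ℝ), Real.exp (-z / 2) * Real.cos (β * z) * Real.exp (-z) ^ l
      = Real.exp (-((l : ℝ) + 1 / 2) * z) * Real.cos (β * z) := by
    intro l z
    rw [← Real.exp_nat_mul, mul_right_comm, ← Real.exp_add]
    congr 2; ring
  have hFint : ∀ N, 2 * ∫ z in Set.Ioi (0 : ℝ), F N z = ∑ l ∈ Finset.range (N + 1),
        (2 * (l : ℝ) + 1) * legendreP l y / ((l : ℝ) * ((l : ℝ) + 1) + w) := by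
    intro N
    have : ∀ z, F N z = ∑ l ∈ Finset.range (N + 1), legendreP l y *
        (Real.exp (-((l : ℝ) + 1 / 2) * z) * Real.cos (β * z)) := by
      intro z
      simp only [hF, Finset.mul_sum, ← hterm]
      exact Finset.sum_congr rfl fun l _ => by ring
    simp only [this]
    rw [MeasureTheory.integral_finsetSum _
      (fun (l : ℕ) _ => ((lg_laplace ((l : ℝ) + 1 / 2) β (by positivity)).1.const_mul _)),
      Finset.mul_sum]
    refine Finset.sum_congr rfl fun l _ => ?_
    rw [MeasureTheory.integral_const_mul, (lg_laplace ((l : ℝ) + 1 / 2) β (by positivity)).2]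
    have e : ((l : ℝ) + 1 / 2) ^ 2 + β ^ 2 = (l : ℝ) * ((l : ℝ) + 1) + w := by rw [hβ2]; ring
    rw [e]; ring
  have hsne : ∀ z : ℝ, Real.sqrt (1 - 2 * Real.exp (-z) * y + Real.exp (-z) ^ 2) ≠ 0 :=
    fun z => (hc0.trans_le (hcs z)).ne'
  refine ⟨?_, ?_⟩
  · refine MeasureTheory.Integrable.mono' (hexp.mul_const (1 / c)) ?_ ?_
    · refine Continuous.aestronglyMeasurable ?_
      exact Continuous.div (by fun_prop) (by fun_prop) hsne
    · refine Filter.Eventually.of_forall fun z => ?_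
      rw [Real.norm_eq_abs, abs_div, abs_of_pos (hc0.trans_le (hcs z)), mul_one_div]
      have := hcos z
      have := hcs z
      gcongr
  · rw [← tendsto_add_atTop_iff_nat 1]
    simp only [← hFint]
    refine Tendsto.const_mul 2 ?_
    refine MeasureTheory.tendsto_integral_of_dominated_convergence
      (fun z => Real.exp (-z / 2) * ((1 + 2 / c) / c)) ?_ (hexp.mul_const _) ?_ ?_
    · intro N
      refine Continuous.aestronglyMeasurable ?_
      simp only [hF]; fun_prop
    · intro N
      refine (MeasureTheory.ae_restrict_iff' measurableSet_Ioi).2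
        (Filter.Eventually.of_forall fun z hz => ?_)
      have hz : 0 < z := hz
      have hr1 : Real.exp (-z) ≤ 1 := Real.exp_le_one_iff.2 (by linarith)
      have hb := lg_partial_bound y (Real.exp (-z)) c hy₁ hy₂ (Real.exp_pos _).le hr1 hc N
      have hz2 := hcs z
      simp only [hF]
      rw [Real.norm_eq_abs, abs_mul]
      refine mul_le_mul (hcos z) ?_ (abs_nonneg _) (Real.exp_pos _).le
      set S := ∑ l ∈ Finset.range (N + 1), legendreP l y * Real.exp (-z) ^ l
      set s := Real.sqrt (1 - 2 * Real.exp (-z) * y + Real.exp (-z) ^ 2)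
      rw [le_div_iff₀ hc0]
      have h1 : 2 / c * Real.exp (-z) ^ (N + 1) ≤ 2 / c :=
        mul_le_of_le_one_right (by positivity) (pow_le_one₀ (Real.exp_pos _).le hr1)
      have h2 : |S * s| ≤ 1 + 2 / c := by
        have := abs_sub_abs_le_abs_sub (S * s) 1
        rw [abs_one] at this
        linarith
      rw [abs_mul, abs_of_pos (hc0.trans_le hz2)] at h2
      exact (mul_le_mul_of_nonneg_left hz2 (abs_nonneg _)).trans h2
    · refine (MeasureTheory.ae_restrict_iff' measurableSet_Ioi).2
        (Filter.Eventually.of_forall fun z hz => ?_)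
      have hz : 0 < z := hz
      have hr1 : Real.exp (-z) < 1 := Real.exp_lt_one_iff.2 (by linarith)
      have hb := lg_partial_bound y (Real.exp (-z)) c hy₁ hy₂ (Real.exp_pos _).le hr1.le hc
      set s := Real.sqrt (1 - 2 * Real.exp (-z) * y + Real.exp (-z) ^ 2) with hs
      have hs0 : s ≠ 0 := hsne z
      have hp : Tendsto (fun N : ℕ => 2 / c * Real.exp (-z) ^ (N + 1)) atTop (𝓝 0) := by
        have := ((tendsto_add_atTop_iff_nat 1).2
          (tendsto_pow_atTop_nhds_zero_of_lt_one (Real.exp_pos (-z)).le hr1)).const_mul (2 / c)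
        simpa using this
      have ht := squeeze_zero_norm (fun N => (Real.norm_eq_abs _).trans_le (hb N)) hp
      have ht2 := ((ht.add_const 1).const_mul (Real.exp (-z / 2) * Real.cos (β * z) / s))
      rw [zero_add, mul_one] at ht2
      refine ht2.congr fun N => ?_
      simp only [hF]
      field_simp
      ring
end

section
/- For every real β, ∫_0^∞ e^{-z/2}·cos(βz)/(1 + e^{-z}) dz = π/(2·cosh(πβ)); equivalently, ∫_0^∞ cos(βz)/(2·cosh(z/2)) dz = π/(2·cosh(πβ)). Consequently, the Green's function of the screened Poisson equation on the sphere at angular separation γ = π (i.e. cos(γ) = -1) equals G = -1/(4·cosh(πβ)). -/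
lemma beta_point (β x : ℝ) :
    |Real.sigmoid x * (1 - Real.sigmoid x)| •
      (((Real.sigmoid x : ℝ) : ℂ) ^ ((1 / 2 + β * Complex.I : ℂ) - 1) *
        (1 - ((Real.sigmoid x : ℝ) : ℂ)) ^ ((1 / 2 - β * Complex.I : ℂ) - 1)) =
      Complex.exp (β * x * Complex.I) * ((1 / (2 * Real.cosh (x / 2)) : ℝ) : ℂ) := by
  have hp := Real.sigmoid_pos x
  have hq : 0 < 1 - Real.sigmoid x := by linarith [Real.sigmoid_lt_one x]
  have hr : Real.sigmoid x * Real.exp (-x) = 1 - Real.sigmoid x := by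
    rw [Real.sigmoid_mul_rexp_neg, Real.sigmoid_neg]
  obtain ⟨a, ha⟩ : ∃ a, Real.exp a = Real.sigmoid x := ⟨_, Real.exp_log hp⟩
  obtain ⟨b, hb⟩ : ∃ b, Real.exp b = 1 - Real.sigmoid x := ⟨_, Real.exp_log hq⟩
  have hx : x = a - b := by
    rw [← hb, ← ha, ← Real.exp_add] at hr
    have := Real.exp_injective hr
    linarith
  have hsum : Real.exp a + Real.exp b = 1 := by rw [ha, hb]; ring
  have hc : 1 / (2 * Real.cosh (x / 2)) = Real.exp ((a + b) / 2) := by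
    rw [div_eq_iff (by positivity), Real.cosh_eq, hx, ← hsum]
    have e1 : a = (a + b) / 2 + (a - b) / 2 := by ring
    have e2 : b = (a + b) / 2 + -((a - b) / 2) := by ring
    conv_lhs => rw [e1, e2]
    rw [Real.exp_add, Real.exp_add]
    have e3 : ((a + b) / 2 + (a - b) / 2 + ((a + b) / 2 + -((a - b) / 2))) / 2 = (a + b) / 2 := by ring
    ring_nf
  have hcast : (1 - ((Real.sigmoid x : ℝ) : ℂ)) = ((Real.exp b : ℝ) : ℂ) := by
    rw [hb]; push_cast; ring
  rw [abs_of_pos (mul_pos hp hq), hcast, hc, ← ha, Complex.real_smul,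
    Complex.cpow_def_of_ne_zero (by simp), Complex.cpow_def_of_ne_zero (by simp),
    ← Complex.ofReal_log (Real.exp_pos a).le, ← Complex.ofReal_log (Real.exp_pos b).le,
    Real.log_exp, Real.log_exp, ha, ← hb, ← ha]
  rw [← Real.exp_add, Complex.ofReal_exp, Complex.ofReal_exp, ← Complex.exp_add,
    ← Complex.exp_add, ← Complex.exp_add, hx]
  congr 1
  push_cast
  ring

lemma full_integral (β : ℝ) :
    ∫ x : ℝ, Complex.exp (β * x * Complex.I) * ((1 / (2 * Real.cosh (x / 2)) : ℝ) : ℂ) =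
      ((Real.pi / Real.cosh (Real.pi * β) : ℝ) : ℂ) := by
  have h := MeasureTheory.integral_image_eq_integral_abs_deriv_smul (s := Set.univ)
    (f := Real.sigmoid) MeasurableSet.univ
    (fun x _ => (Real.hasDerivAt_sigmoid x).hasDerivWithinAt) Real.sigmoid_injective.injOn
    (fun x : ℝ => (x : ℂ) ^ ((1 / 2 + β * Complex.I : ℂ) - 1) *
        (1 - (x : ℂ)) ^ ((1 / 2 - β * Complex.I : ℂ) - 1))
  simp only [beta_point, MeasureTheory.setIntegral_univ, Set.image_univ, Real.range_sigmoid] at h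
  rw [← h, ← MeasureTheory.integral_Ioc_eq_integral_Ioo,
    ← intervalIntegral.integral_of_le zero_le_one]
  change Complex.betaIntegral _ _ = _
  rw [Complex.betaIntegral_eq_Gamma_mul_div _ _ (by simp) (by simp)]
  have e1 : (1 / 2 - β * Complex.I : ℂ) = 1 - (1 / 2 + β * Complex.I) := by ring
  rw [e1, Complex.Gamma_mul_Gamma_one_sub]
  have e2 : (Real.pi : ℂ) * (1 / 2 + β * Complex.I) =
    (Real.pi * β : ℝ) * Complex.I + Real.pi / 2 := by push_cast; ring
  rw [e2, Complex.sin_add_pi_div_two, Complex.cos_mul_I]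
  simp

lemma half_integral (β : ℝ) :
    (∫ z in Set.Ioi (0 : ℝ), Real.cos (β * z) / (2 * Real.cosh (z / 2))) =
      Real.pi / (2 * Real.cosh (Real.pi * β)) := by
  have h := full_integral β
  have hne : ((Real.pi / Real.cosh (Real.pi * β) : ℝ) : ℂ) ≠ 0 := by
    have : Real.pi / Real.cosh (Real.pi * β) ≠ 0 := by positivity
    exact_mod_cast this
  have hi := not_imp_comm.1 MeasureTheory.integral_undef (h.trans_ne hne)
  have h2 := integral_re hi
  rw [h] at h2
  have h3 := integral_comp_abs (f := fun z => Real.cos (β * z) / (2 * Real.cosh (z / 2)))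
  have h4 : ∀ x : ℝ, Real.cos (β * |x|) / (2 * Real.cosh (|x| / 2)) =
      RCLike.re (Complex.exp (β * x * Complex.I) * ((1 / (2 * Real.cosh (x / 2)) : ℝ) : ℂ)) := by
    intro x
    have a1 : Real.cos (β * |x|) = Real.cos (β * x) := by
      rcases abs_choice x with h | h <;> rw [h]
      rw [mul_neg, Real.cos_neg]
    have a2 : Real.cosh (|x| / 2) = Real.cosh (x / 2) := by
      rcases abs_choice x with h | h <;> rw [h]
      rw [neg_div, Real.cosh_neg]
    rw [a1, a2, RCLike.re_eq_complex_re, Complex.re_mul_ofReal, ← Complex.ofReal_mul,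
      Complex.exp_ofReal_mul_I_re]
    ring
  simp only [h4] at h3
  rw [h2, RCLike.re_eq_complex_re, Complex.ofReal_re] at h3
  rw [mul_comm 2 (Real.cosh (Real.pi * β)), ← div_div]
  linarith

/-- For every real `β`, `∫_0^∞ e^{-z/2} cos(βz)/(1 + e^{-z}) dz = π/(2 cosh(πβ))`;
equivalently `∫_0^∞ cos(βz)/(2 cosh(z/2)) dz = π/(2 cosh(πβ))`. Consequently the Green's
function of the screened Poisson equation on the sphere at `cos γ = -1` equals
`-1/(4 cosh(πβ))`. -/
theorem green_at_antipode (β : ℝ) :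
    (∫ z in Set.Ioi (0 : ℝ), Real.exp (-z / 2) * Real.cos (β * z) / (1 + Real.exp (-z))) =
      Real.pi / (2 * Real.cosh (Real.pi * β)) ∧
    (∫ z in Set.Ioi (0 : ℝ), Real.cos (β * z) / (2 * Real.cosh (z / 2))) =
      Real.pi / (2 * Real.cosh (Real.pi * β)) ∧
    (-(1 / (2 * Real.pi)) * ∫ z in Set.Ioi (0 : ℝ), Real.exp (-z / 2) * Real.cos (β * z) /
        Real.sqrt (Real.exp (-2 * z) + 2 * Real.exp (-z) + 1)) =
      -(1 / (4 * Real.cosh (Real.pi * β))) := by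
  have e : ∀ z : ℝ, Real.exp (-z / 2) * Real.cos (β * z) / (1 + Real.exp (-z)) =
      Real.cos (β * z) / (2 * Real.cosh (z / 2)) := by
    intro z
    have h1 : Real.exp (-z) = Real.exp (-z / 2) * Real.exp (-z / 2) := by
      rw [← Real.exp_add]; ring_nf
    have h2 : Real.exp (z / 2) * Real.exp (-z / 2) = 1 := by
      rw [← Real.exp_add]; ring_nf; simp
    have h3 : -(z / 2) = -z / 2 := by ring
    rw [div_eq_div_iff (by positivity) (by positivity), Real.cosh_eq, h3, h1]
    linear_combination Real.cos (β * z) * h2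
  have s : ∀ z : ℝ, Real.sqrt (Real.exp (-2 * z) + 2 * Real.exp (-z) + 1) =
      1 + Real.exp (-z) := by
    intro z
    have h1 : Real.exp (-2 * z) = Real.exp (-z) * Real.exp (-z) := by
      rw [← Real.exp_add]; ring_nf
    rw [h1, show Real.exp (-z) * Real.exp (-z) + 2 * Real.exp (-z) + 1 =
      (1 + Real.exp (-z)) ^ 2 by ring, Real.sqrt_sq (by positivity)]
  simp only [s, e, half_integral, true_and]
  have := Real.pi_ne_zero
  have := (Real.cosh_pos (Real.pi * β)).ne'
  field_simp
  norm_num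
end

section
/- For every real β, ∫_0^∞ e^{-z/2}·cos(βz)/√(1 + e^{-2z}) dz = Γ(1/4 + iβ/2)·Γ(1/4 - iβ/2)/(4√π), where Γ is the complex Gamma function (the product on the right is a real number, equal to |Γ(1/4 + iβ/2)|²). Consequently, the Green's function of the screened Poisson equation on the sphere at angular separation γ = π/2 (i.e. cos(γ) = 0) equals G = -(1/(8π^{3/2}))·Γ(1/4 + iβ/2)·Γ(1/4 - iβ/2). -/
/-- The even weight. -/
noncomputable def greenW (z : ℝ) : ℝ := Real.exp (-z / 2) / Real.sqrt (1 + Real.exp (-2 * z))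

lemma greenW_eq (z : ℝ) :
    greenW z = Real.exp (-z / 2 - Real.log (1 + Real.exp (-2 * z)) / 2) := by
  have h : 0 < 1 + Real.exp (-2 * z) := by positivity
  rw [greenW, Real.exp_sub, Real.exp_half (Real.log _), Real.exp_log h]

lemma greenW_neg (z : ℝ) : greenW (-z) = greenW z := by
  rw [greenW_eq, greenW_eq]
  have h : 0 < 1 + Real.exp (-2 * z) := by positivity
  have : 1 + Real.exp (-2 * -z) = Real.exp (2 * z) * (1 + Real.exp (-2 * z)) := by
    rw [mul_add, ← Real.exp_add]
    ring_nf
    simp [add_comm]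
  rw [this, Real.log_mul (Real.exp_pos _).ne' h.ne', Real.log_exp]
  congr 1
  ring

lemma green_pointwise (β z : ℝ) :
    |2 * (Real.sigmoid (2 * z) * (1 - Real.sigmoid (2 * z)))| •
      (((Real.sigmoid (2 * z) : ℝ) : ℂ) ^ ((1 / 4 + Complex.I * β / 2) - 1) *
        (1 - ((Real.sigmoid (2 * z) : ℝ) : ℂ)) ^ ((1 / 4 - Complex.I * β / 2) - 1)) =
      2 * ((greenW z : ℂ) * Complex.exp (Complex.I * β * z)) := by
  have h : 0 < 1 + Real.exp (-2 * z) := by positivity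
  set L := Real.log (1 + Real.exp (-2 * z)) with hL
  have hs : Real.sigmoid (2 * z) = Real.exp (-L) := by
    rw [Real.sigmoid_def, Real.exp_neg L, hL, Real.exp_log h]
    ring_nf
  have hsr : 1 - Real.sigmoid (2 * z) = Real.exp (-L - 2 * z) := by
    rw [← Real.sigmoid_neg, ← Real.sigmoid_mul_rexp_neg, hs, ← Real.exp_add]
    ring_nf
  have hsc : (1 : ℂ) - ((Real.sigmoid (2 * z) : ℝ) : ℂ) = ((Real.exp (-L - 2 * z) : ℝ) : ℂ) := by
    rw [← hsr]; push_cast; ring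
  have key : ∀ (x : ℝ) (a : ℂ), ((Real.exp x : ℝ) : ℂ) ^ a = Complex.exp (x * a) := by
    intro x a
    rw [Complex.cpow_def_of_ne_zero (by exact_mod_cast (Real.exp_pos x).ne'),
      ← Complex.ofReal_log (Real.exp_pos x).le, Real.log_exp]
  rw [hsc, hsr, hs, key, key, abs_of_pos (by positivity), greenW_eq, ← hL, Complex.real_smul]
  push_cast
  rw [mul_assoc]
  congr 1
  simp only [← Complex.exp_add]
  congr 1
  ring

lemma green_image : (fun z : ℝ => Real.sigmoid (2 * z)) '' Set.univ = Set.Ioo 0 1 := by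
  rw [Set.image_univ, ← Real.range_sigmoid]
  exact (Function.Surjective.range_comp (f := fun z : ℝ => 2 * z)
    (fun y => ⟨y / 2, by ring⟩) Real.sigmoid)

lemma green_deriv (z : ℝ) : HasDerivWithinAt (fun z : ℝ => Real.sigmoid (2 * z))
    (2 * (Real.sigmoid (2 * z) * (1 - Real.sigmoid (2 * z)))) Set.univ z := by
  have h1 : HasDerivAt (fun z : ℝ => 2 * z) 2 z := by
    simpa using (hasDerivAt_id z).const_mul 2
  have := (Real.hasDerivAt_sigmoid (2 * z)).comp z h1
  rw [mul_comm] at this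
  exact this.hasDerivWithinAt

lemma green_inj : Set.InjOn (fun z : ℝ => Real.sigmoid (2 * z)) Set.univ := by
  intro a _ b _ h
  have := Real.sigmoid_injective h
  linarith

lemma green_integrable (β : ℝ) :
    MeasureTheory.Integrable
      (fun z : ℝ => (greenW z : ℂ) * Complex.exp (Complex.I * β * z)) := by
  have hc := Complex.betaIntegral_convergent (u := 1 / 4 + Complex.I * β / 2)
    (v := 1 / 4 - Complex.I * β / 2) (by simp) (by simp)
  rw [intervalIntegrable_iff_integrableOn_Ioo_of_le zero_le_one, ← green_image,
    MeasureTheory.integrableOn_image_iff_integrableOn_abs_deriv_smul MeasurableSet.univ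
      (fun z _ => green_deriv z) green_inj] at hc
  simp only [green_pointwise] at hc
  rw [MeasureTheory.integrableOn_univ] at hc
  have := hc.const_mul (1 / 2)
  refine this.congr (Filter.Eventually.of_forall fun z => ?_)
  simp only
  ring

lemma green_integral (β : ℝ) :
    ∫ z : ℝ, (greenW z : ℂ) * Complex.exp (Complex.I * β * z) =
      Complex.Gamma (1 / 4 + Complex.I * β / 2) * Complex.Gamma (1 / 4 - Complex.I * β / 2) /
        (2 * Real.sqrt Real.pi) := by
  have hc := Complex.betaIntegral_eq_Gamma_mul_div (1 / 4 + Complex.I * β / 2)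
    (1 / 4 - Complex.I * β / 2) (by simp) (by simp)
  rw [Complex.betaIntegral, intervalIntegral.integral_of_le zero_le_one,
    MeasureTheory.integral_Ioc_eq_integral_Ioo, ← green_image,
    MeasureTheory.integral_image_eq_integral_abs_deriv_smul MeasurableSet.univ
      (fun z _ => green_deriv z) green_inj] at hc
  simp only [green_pointwise] at hc
  rw [MeasureTheory.setIntegral_univ, MeasureTheory.integral_const_mul,
    show (1 / 4 + Complex.I * β / 2 + (1 / 4 - Complex.I * β / 2) : ℂ) = ((1 / 2 : ℝ) : ℂ) by
      push_cast; ring, Complex.Gamma_ofReal, Real.Gamma_one_half_eq] at hc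
  rw [mul_comm (2 : ℂ) (Real.sqrt Real.pi : ℂ), ← div_div, ← hc]
  ring

lemma green_aux_main (β : ℝ) :
    ((∫ z in Set.Ioi (0 : ℝ), Real.exp (-z / 2) * Real.cos (β * z) /
        Real.sqrt (1 + Real.exp (-2 * z)) : ℝ) : ℂ) =
      Complex.Gamma (1 / 4 + Complex.I * β / 2) * Complex.Gamma (1 / 4 - Complex.I * β / 2) /
        (4 * Real.sqrt Real.pi) := by
  have hi := green_integrable β
  have h := green_integral β
  have hn := integral_comp_neg_Ioi 0
    (fun z : ℝ => (greenW z : ℂ) * Complex.exp (Complex.I * β * z))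
  rw [neg_zero] at hn
  rw [← intervalIntegral.integral_Iic_add_Ioi (b := 0) hi.integrableOn hi.integrableOn, ← hn,
    ← MeasureTheory.integral_add hi.comp_neg.integrableOn hi.integrableOn] at h
  have h2 : ∀ z : ℝ, (greenW (-z) : ℂ) * Complex.exp (Complex.I * β * ((-z : ℝ) : ℂ)) +
      (greenW z : ℂ) * Complex.exp (Complex.I * β * z) =
      2 * ((Real.exp (-z / 2) * Real.cos (β * z) /
        Real.sqrt (1 + Real.exp (-2 * z)) : ℝ) : ℂ) := by
    intro z
    have : Real.exp (-z / 2) * Real.cos (β * z) / Real.sqrt (1 + Real.exp (-2 * z)) =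
      greenW z * Real.cos (β * z) := by rw [greenW]; ring
    rw [this, greenW_neg, Complex.ofReal_mul, Complex.ofReal_cos, Complex.cos]
    push_cast
    ring_nf
  simp only [h2] at h
  rw [MeasureTheory.integral_const_mul, integral_complex_ofReal] at h
  rw [show (4 * (Real.sqrt Real.pi : ℂ)) = 2 * Real.sqrt Real.pi * 2 by ring, ← div_div, ← h]
  exact (mul_div_cancel_left₀ _ two_ne_zero).symm

/-- For every real `β`,
`∫_0^∞ e^{-z/2} cos(βz)/√(1 + e^{-2z}) dz = Γ(1/4 + iβ/2) Γ(1/4 - iβ/2)/(4√π)`.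
Consequently the Green's function of the screened Poisson equation on the sphere at
`cos γ = 0` equals `-(1/(8 π^{3/2})) Γ(1/4 + iβ/2) Γ(1/4 - iβ/2)`. -/
theorem green_at_right_angle (β : ℝ) :
    ((∫ z in Set.Ioi (0 : ℝ), Real.exp (-z / 2) * Real.cos (β * z) /
        Real.sqrt (1 + Real.exp (-2 * z)) : ℝ) : ℂ) =
      Complex.Gamma (1 / 4 + Complex.I * β / 2) * Complex.Gamma (1 / 4 - Complex.I * β / 2) /
        (4 * Real.sqrt Real.pi) ∧
    ((-(1 / (2 * Real.pi)) * ∫ z in Set.Ioi (0 : ℝ), Real.exp (-z / 2) * Real.cos (β * z) /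
        Real.sqrt (Real.exp (-2 * z) + 1) : ℝ) : ℂ) =
      -(1 / (8 * (Real.pi : ℝ) ^ ((3 : ℝ) / 2) : ℝ)) *
        (Complex.Gamma (1 / 4 + Complex.I * β / 2) *
          Complex.Gamma (1 / 4 - Complex.I * β / 2)) := by
  have h1 := green_aux_main β
  refine ⟨h1, ?_⟩
  simp_rw [add_comm (Real.exp _) (1 : ℝ)]
  rw [Complex.ofReal_mul, h1]
  have hpi : (Real.pi : ℝ) ^ ((3 : ℝ) / 2) = Real.pi * Real.sqrt Real.pi := by
    rw [Real.sqrt_eq_rpow, show (3 : ℝ) / 2 = 1 + 1 / 2 by norm_num,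
      Real.rpow_add Real.pi_pos, Real.rpow_one]
  rw [hpi]
  have ha : (Real.pi : ℂ) ≠ 0 := by exact_mod_cast Real.pi_ne_zero
  have hb : (Real.sqrt Real.pi : ℂ) ≠ 0 := by
    exact_mod_cast (Real.sqrt_pos.2 Real.pi_pos).ne'
  push_cast
  field_simp
  ring
end
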